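/- Under the system model, for every l ∈ {1,…,L} and k ∈ {1,…,K}, let ĥ_{jlk}(t) = λ_{jlk} Σ_{b=1}^{B} c_b y_j(b) with (c_1,…,c_B) = x̃_{lk}ᴴ D_{δ(t)} Ψ_j⁻¹ be the LMMSE estimate of h_{jlk}(t). Then the error covariance matrix satisfies E[(h_{jlk}(t) − ĥ_{jlk}(t))(h_{jlk}(t) − ĥ_{jlk}(t))ᴴ] = λ_{jlk} (1 − λ_{jlk} x̃_{lk}ᴴ D_{δ(t)} Ψ_j⁻¹ D_{δ(t)}ᴴ x̃_{lk}) · I_N, and consequently the mean squared error equals E[‖h_{jlk}(t) − ĥ_{jlk}(t)‖²] = N λ_{jlk} (1 − λ_{jlk} x̃_{lk}ᴴ D_{δ(t)} Ψ_j⁻¹ D_{δ(t)}ᴴ x̃_{lk}). -/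

import Mathlib

open MeasureTheory ProbabilityTheory Matrix Complex
open scoped ProbabilityTheory Kronecker

/-- Deterministic phase-drift damping matrix
`D_{δ(t)} = diag(e^{−δ(t−1)/2}, …, e^{−δ(t−B)/2})`; the `b`-th diagonal entry
(`b : Fin B`, corresponding to pilot time `b+1`) is `e^{−δ(t−(b+1))/2}`. -/
noncomputable def Dmat (δ : ℝ) (t B : ℕ) : Matrix (Fin B) (Fin B) ℂ :=
  Matrix.diagonal fun b => (Real.exp (-(δ / 2) * ((t : ℝ) - ((b : ℕ) + 1))) : ℂ)

/-- Deterministic pilot matrix `X_{ℓm}` built from the pilot sequence `xv`: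
diagonal entries `|x(b)|²(1+κ²)` and off-diagonal entries `x(b₁)x(b₂)* e^{−δ|b₁−b₂|/2}`. -/
noncomputable def Xmat {B : ℕ} (κ δ : ℝ) (xv : Fin B → ℂ) : Matrix (Fin B) (Fin B) ℂ :=
  Matrix.of fun b₁ b₂ =>
    if b₁ = b₂ then ((Complex.normSq (xv b₁) * (1 + κ ^ 2) : ℝ) : ℂ)
    else xv b₁ * star (xv b₂) * (Real.exp (-(δ / 2) * |((b₁ : ℕ) : ℝ) - ((b₂ : ℕ) : ℝ)|) : ℂ)

/-- Deterministic matrix `Ψ_j = Σ_ℓ Σ_m λ_{jℓm} X_{ℓm} + σ²ξ I_B`. -/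
noncomputable def PsiMat {B L K : ℕ} (lam : Fin L → Fin K → ℝ) (σ2 ξ κ δ : ℝ)
    (x : Fin L → Fin K → Fin B → ℂ) : Matrix (Fin B) (Fin B) ℂ :=
  (∑ l, ∑ m, ((lam l m : ℝ) : ℂ) • Xmat κ δ (x l m)) + ((σ2 * ξ : ℝ) : ℂ) • 1

/-- The uplink massive MIMO system model at base station `j`, on the probability space `Ω`,
with `N` antennas, pilot length `B`, `L` cells, `K` users per cell, channel attenuations
`lam l k = λ_{jlk}`, noise variance `σ2 = σ²`, noise amplification `ξ`, distortion parameter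
`κ`, phase-drift variance `δ`, and deterministic pilot sequences `x l k : Fin B → ℂ`
(pilot time `b+1` for `b : Fin B`).  All underlying real random sources are mutually
independent: channel real/imaginary parts `hRe, hIm ~ N(0, λ_{jlk}/2)` (so the channel
coefficients are `CN(0, λ_{jlk})`), phase-drift increments `dphi n u ~ N(0, δ)` (`u ≥ 1`),
distortion real/imaginary parts `zRe, zIm ~ N(0, 1/2)` (so `z ~ CN(0,1)`), and receiver-noise
real/imaginary parts `etaRe, etaIm ~ N(0, σ²ξ/2)` (so `η ~ CN(0, σ²ξ)`). -/
structure MIMOModel (Ω : Type*) [MeasureSpace Ω] (N B L K : ℕ)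
    (lam : Fin L → Fin K → ℝ) (σ2 ξ κ δ : ℝ) (x : Fin L → Fin K → Fin B → ℂ) where
  hRe : Fin L → Fin K → Fin N → Ω → ℝ
  hIm : Fin L → Fin K → Fin N → Ω → ℝ
  dphi : Fin N → ℕ → Ω → ℝ
  zRe : Fin N → ℕ → Ω → ℝ
  zIm : Fin N → ℕ → Ω → ℝ
  etaRe : Fin N → ℕ → Ω → ℝ
  etaIm : Fin N → ℕ → Ω → ℝ
  meas_hRe : ∀ l k n, Measurable (hRe l k n)
  meas_hIm : ∀ l k n, Measurable (hIm l k n)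
  meas_dphi : ∀ n u, Measurable (dphi n u)
  meas_zRe : ∀ n s, Measurable (zRe n s)
  meas_zIm : ∀ n s, Measurable (zIm n s)
  meas_etaRe : ∀ n s, Measurable (etaRe n s)
  meas_etaIm : ∀ n s, Measurable (etaIm n s)
  law_hRe : ∀ l k n, Measure.map (hRe l k n) ℙ = gaussianReal 0 (Real.toNNReal (lam l k / 2))
  law_hIm : ∀ l k n, Measure.map (hIm l k n) ℙ = gaussianReal 0 (Real.toNNReal (lam l k / 2))
  law_dphi : ∀ n u, Measure.map (dphi n u) ℙ = gaussianReal 0 (Real.toNNReal δ)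
  law_zRe : ∀ n s, Measure.map (zRe n s) ℙ = gaussianReal 0 (Real.toNNReal (1 / 2))
  law_zIm : ∀ n s, Measure.map (zIm n s) ℙ = gaussianReal 0 (Real.toNNReal (1 / 2))
  law_etaRe : ∀ n s, Measure.map (etaRe n s) ℙ = gaussianReal 0 (Real.toNNReal (σ2 * ξ / 2))
  law_etaIm : ∀ n s, Measure.map (etaIm n s) ℙ = gaussianReal 0 (Real.toNNReal (σ2 * ξ / 2))
  indep : iIndepFun (m := fun _ => (inferInstance : MeasurableSpace ℝ))
    (fun i : (Fin L × Fin K × Fin N × Bool) ⊕ (Fin N × ℕ) ⊕ (Fin N × ℕ × Bool) ⊕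
        (Fin N × ℕ × Bool) =>
      match i with
      | Sum.inl (l, k, n, false) => hRe l k n
      | Sum.inl (l, k, n, true) => hIm l k n
      | Sum.inr (Sum.inl (n, u)) => dphi n u
      | Sum.inr (Sum.inr (Sum.inl (n, s, false))) => zRe n s
      | Sum.inr (Sum.inr (Sum.inl (n, s, true))) => zIm n s
      | Sum.inr (Sum.inr (Sum.inr (n, s, false))) => etaRe n s
      | Sum.inr (Sum.inr (Sum.inr (n, s, true))) => etaIm n s) (ℙ : Measure Ω)

namespace MIMOModel

variable {Ω : Type*} [MeasureSpace Ω] {N B L K : ℕ} {lam : Fin L → Fin K → ℝ}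
  {σ2 ξ κ δ : ℝ} {x : Fin L → Fin K → Fin B → ℂ}

variable (M : MIMOModel Ω N B L K lam σ2 ξ κ δ x)

/-- Accumulated phase drift `φ_{jn}(s) = Σ_{u=1}^{s} Δ_{jn}(u)`. -/
noncomputable def phase (n : Fin N) (s : ℕ) (ω : Ω) : ℝ :=
  ∑ u ∈ Finset.Icc 1 s, M.dphi n u ω

/-- Channel coefficient `h_{jlk}^{(n)} ~ CN(0, λ_{jlk})`. -/
noncomputable def ch (l : Fin L) (k : Fin K) (n : Fin N) (ω : Ω) : ℂ :=
  Complex.mk (M.hRe l k n ω) (M.hIm l k n ω)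

/-- Distortion variable `z_{jn}(s) ~ CN(0,1)`. -/
noncomputable def z (n : Fin N) (s : ℕ) (ω : Ω) : ℂ :=
  Complex.mk (M.zRe n s ω) (M.zIm n s ω)

/-- Receiver noise `η_j^{(n)}(s) ~ CN(0, σ²ξ)`. -/
noncomputable def eta (n : Fin N) (s : ℕ) (ω : Ω) : ℂ :=
  Complex.mk (M.etaRe n s ω) (M.etaIm n s ω)

/-- Received pilot signal at antenna `n`, pilot time `b+1` (for `b : Fin B`):
`y_j^{(n)}(b) = e^{iφ_{jn}(b)} Σ_l Σ_m h_{jlm}^{(n)} x_{lm}(b)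
  + κ (Σ_l Σ_m |x_{lm}(b)|² |h_{jlm}^{(n)}|²)^{1/2} z_{jn}(b) + η_j^{(n)}(b)`. -/
noncomputable def y (n : Fin N) (b : Fin B) (ω : Ω) : ℂ :=
  Complex.exp (Complex.I * ((M.phase n ((b : ℕ) + 1) ω : ℝ) : ℂ))
      * ∑ l, ∑ m, M.ch l m n ω * x l m b
    + (κ : ℂ) * ((Real.sqrt (∑ l, ∑ m, Complex.normSq (x l m b)
        * Complex.normSq (M.ch l m n ω)) : ℝ) : ℂ) * M.z n ((b : ℕ) + 1) ω
    + M.eta n ((b : ℕ) + 1) ω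

/-- Effective channel at time `t`: `h_{jlk}(t)` has `n`-th entry `e^{iφ_{jn}(t)} h_{jlk}^{(n)}`. -/
noncomputable def hEff (l : Fin L) (k : Fin K) (t : ℕ) (n : Fin N) (ω : Ω) : ℂ :=
  Complex.exp (Complex.I * ((M.phase n t ω : ℝ) : ℂ)) * M.ch l k n ω

/-- LMMSE channel estimate `ĥ_{jlk}(t) = λ_{jlk} Σ_b c_b y_j(b)` with
`(c_1, …, c_B) = x̃_{lk}ᴴ D_{δ(t)} Ψ_j⁻¹`. -/
noncomputable def hHat (l : Fin L) (k : Fin K) (t : ℕ) (n : Fin N) (ω : Ω) : ℂ :=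
  ((lam l k : ℝ) : ℂ) * ∑ b,
    Matrix.vecMul (star (x l k)) (Dmat δ t B * (PsiMat lam σ2 ξ κ δ x)⁻¹) b * M.y n b ω

/-- Data-phase distortion noise `υ_j(t)` with `n`-th entry
`κ (Σ_l Σ_m p_{lm} |h_{jlm}^{(n)}|²)^{1/2} z_{jn}(t)`. -/
noncomputable def ups (p : Fin L → Fin K → ℝ) (t : ℕ) (n : Fin N) (ω : Ω) : ℂ :=
  (κ : ℂ) * ((Real.sqrt (∑ l, ∑ m, p l m * Complex.normSq (M.ch l m n ω)) : ℝ) : ℂ)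
    * M.z n t ω

/-- The uplink SINR of user `k` in cell `j` at time `t` with the MRC filter
`v_{jk}(t) = ĥ_{jjk}(t)`. -/
noncomputable def SINR (p : Fin L → Fin K → ℝ) (j : Fin L) (k : Fin K) (t : ℕ) : ℝ :=
  p j k * Complex.normSq (∫ ω, ∑ n, star (M.hHat j k t n ω) * M.hEff j k t n ω) /
    ((∑ l, ∑ m, p l m * ∫ ω, Complex.normSq (∑ n, star (M.hHat j k t n ω) * M.hEff l m t n ω))
      - p j k * Complex.normSq (∫ ω, ∑ n, star (M.hHat j k t n ω) * M.hEff j k t n ω)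
      + (∫ ω, Complex.normSq (∑ n, star (M.hHat j k t n ω) * M.ups p t n ω))
      + σ2 * ξ * ∫ ω, ∑ n, Complex.normSq (M.hHat j k t n ω))

end MIMOModel

/-!
In `L²(Ω; ℂ)` the estimate at one antenna is the orthogonal projection of the effective channel `h`
onto the span of the received pilots: its coefficients `c` solve the normal equations `c Ψ = r`,
where `Ψ` is the Gram matrix of the pilots and `r` their vector of correlations with `h`. The
residual therefore has squared norm `‖h‖² - r Ψ⁻¹ rᴴ`.

Each of the channel, distortion and noise terms is a product of a centered random variable with
factors independent of it, so distinct terms are uncorrelated. What survives are the variances,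
damped by `E[e^{i(φ(s) - φ(r))}] = e^{-δ|s - r|/2}`, the characteristic function at `1` of the
phase drift accumulated between the times `r` and `s`. Finally `Ψ` is invertible because the
signal without receiver noise contributes a Gram matrix and the noise the positive multiple `σ²ξ`
of the identity.
-/

section GeneralLemmas

open scoped NNReal InnerProductSpace

section LinearEstimation

variable {𝕜 E ι : Type*} [RCLike 𝕜] [NormedAddCommGroup E] [InnerProductSpace 𝕜 E]
  [Fintype ι] [DecidableEq ι]

theorem inner_sub_sum_vecMul_inv_smul_eq_zero {h : E} {y : ι → E} {Ψ : Matrix ι ι 𝕜} {r : ι → 𝕜}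
    (hΨ : IsUnit Ψ) (hy : ∀ i j, ⟪y j, y i⟫_𝕜 = Ψ i j) (hr : ∀ i, ⟪y i, h⟫_𝕜 = r i) (j : ι) :
    ⟪y j, h - ∑ i, (r ᵥ* Ψ⁻¹) i • y i⟫_𝕜 = 0 := by
  have normal_equation : (r ᵥ* Ψ⁻¹) ᵥ* Ψ = r := by
    rw [vecMul_vecMul, nonsing_inv_mul _ ((isUnit_iff_isUnit_det _).1 hΨ), vecMul_one]
  have hj := congrFun normal_equation j
  simp only [vecMul, dotProduct] at hj
  simp only [inner_sub_right, inner_sum, inner_smul_right, hy, hr, vecMul, dotProduct, hj, sub_self]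

theorem inner_self_sub_sum_vecMul_inv_smul {h : E} {y : ι → E} {Ψ : Matrix ι ι 𝕜} {r : ι → 𝕜}
    (hΨ : IsUnit Ψ) (hy : ∀ i j, ⟪y j, y i⟫_𝕜 = Ψ i j) (hr : ∀ i, ⟪y i, h⟫_𝕜 = r i) :
    ⟪h - ∑ i, (r ᵥ* Ψ⁻¹) i • y i, h - ∑ i, (r ᵥ* Ψ⁻¹) i • y i⟫_𝕜
      = ⟪h, h⟫_𝕜 - (r ᵥ* Ψ⁻¹) ⬝ᵥ star r := by
  have hr_conj (i : ι) : ⟪h, y i⟫_𝕜 = star (r i) := by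
    rw [← hr, RCLike.star_def, inner_conj_symm]
  rw [inner_sub_left, sum_inner]
  simp only [inner_smul_left, inner_sub_sum_vecMul_inv_smul_eq_zero hΨ hy hr, mul_zero,
    Finset.sum_const_zero, sub_zero]
  simp only [inner_sub_right, inner_sum, inner_smul_right, hr_conj, dotProduct, Pi.star_apply]

end LinearEstimation

section Moments

variable {Ω : Type*} [MeasurableSpace Ω] {μ : Measure Ω}

theorem integral_mul_star_eq_inner {f g : Ω → ℂ} {F G : Ω →₂[μ] ℂ} (hF : F =ᵐ[μ] f)
    (hG : G =ᵐ[μ] g) : ∫ ω, f ω * star (g ω) ∂μ = ⟪G, F⟫_ℂ := by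
  rw [L2.inner_def]
  refine integral_congr_ae ?_
  filter_upwards [hF, hG] with ω hFω hGω
  rw [hFω, hGω, RCLike.inner_apply, RCLike.star_def]

theorem coeFn_sum_smul {ι : Type*} [Fintype ι] {f : ι → Ω → ℂ} {F : ι → Ω →₂[μ] ℂ} (c : ι → ℂ)
    (hF : ∀ i, F i =ᵐ[μ] f i) : ⇑(∑ i, c i • F i) =ᵐ[μ] fun ω => ∑ i, c i * f i ω := by
  filter_upwards [Lp.coeFn_fun_finsetSum Finset.univ fun i => c i • F i, ae_all_iff.2 hF,
    ae_all_iff.2 fun i => Lp.coeFn_smul (c i) (F i)] with ω hsum hF hsmul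
  simp only [hsum, hsmul, Pi.smul_apply, hF, smul_eq_mul]

theorem integral_mul_star_self (f : Ω → ℂ) :
    ∫ ω, f ω * star (f ω) ∂μ = ((∫ ω, normSq (f ω) ∂μ : ℝ) : ℂ) := by
  simp only [← integral_complex_ofReal, star_def, mul_conj]

theorem integrable_normSq_of_memLp_two {f : Ω → ℂ} (hf : MemLp f 2 μ) :
    Integrable (fun ω => normSq (f ω)) μ := by
  simpa only [normSq_eq_norm_sq] using
    (memLp_two_iff_integrable_sq_norm hf.aestronglyMeasurable).1 hf

theorem integral_sum_normSq_eq_trace {ι : Type*} [Fintype ι] {f : ι → Ω → ℂ}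
    (hf : ∀ i, MemLp (f i) 2 μ) :
    ((∫ ω, ∑ i, normSq (f i ω) ∂μ : ℝ) : ℂ)
      = (Matrix.of fun i j => ∫ ω, f i ω * star (f j ω) ∂μ).trace := by
  rw [integral_finsetSum _ fun i _ => integrable_normSq_of_memLp_two (hf i)]
  simp only [ofReal_sum, trace, diag_apply, of_apply, integral_mul_star_self]

theorem integral_mul_star_eq_zero_of_indepFun {F W : Ω → ℂ} (hFW : IndepFun F W μ)
    (hF : Measurable F) (hW : Measurable W) (hW₀ : ∫ ω, W ω ∂μ = 0) :
    ∫ ω, F ω * star (W ω) ∂μ = 0 := by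
  have hconj : ∫ ω, star (W ω) ∂μ = 0 := by
    simp only [star_def, integral_conj, hW₀, map_zero]
  have hFW' : IndepFun F (fun ω => star (W ω)) μ :=
    hFW.comp measurable_id continuous_star.measurable
  rw [hFW'.integral_fun_mul_eq_mul_integral hF.aestronglyMeasurable
    (continuous_star.measurable.comp hW).aestronglyMeasurable, hconj, mul_zero]

/-- A square-integrable complex random variable with mean zero and second absolute moment `v`:
what second-order theory retains of the law `CN(0, v)`. -/
structure IsCenteredWithVariance (Z : Ω → ℂ) (v : ℝ≥0) (μ : Measure Ω) : Prop where
  memLp : MemLp Z 2 μ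
  integral_eq_zero : ∫ ω, Z ω ∂μ = 0
  integral_normSq : ∫ ω, normSq (Z ω) ∂μ = v

theorem integral_sq_of_hasLaw_gaussianReal {X : Ω → ℝ} {v : ℝ≥0}
    (hX : HasLaw X (gaussianReal 0 v) μ) : ∫ ω, X ω ^ 2 ∂μ = v := by
  have hX₀ : ∫ ω, X ω ∂μ = 0 := hX.integral_eq.trans integral_id_gaussianReal
  rw [← variance_of_integral_eq_zero hX.aemeasurable hX₀, hX.variance_eq, variance_id_gaussianReal]

theorem isCenteredWithVariance_mk {X Y : Ω → ℝ} {v : ℝ}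
    (hX : HasLaw X (gaussianReal 0 (v / 2).toNNReal) μ)
    (hY : HasLaw Y (gaussianReal 0 (v / 2).toNNReal) μ) :
    IsCenteredWithVariance (fun ω => Complex.mk (X ω) (Y ω)) v.toNNReal μ := by
  have hX₂ : MemLp X 2 μ := hX.hasGaussianLaw.memLp_two
  have hY₂ : MemLp Y 2 μ := hY.hasGaussianLaw.memLp_two
  have hX₁ : Integrable (fun ω => (X ω : ℂ)) μ := hX.hasGaussianLaw.integrable.ofReal
  have hY₁ : Integrable (fun ω => (Y ω : ℂ) * I) μ :=
    hY.hasGaussianLaw.integrable.ofReal.mul_const I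
  refine ⟨?_, ?_, ?_⟩
  · have hRe : MemLp (fun ω => (X ω : ℂ)) 2 μ := hX₂.ofReal
    have hIm : MemLp (fun ω => (Y ω : ℂ)) 2 μ := hY₂.ofReal
    have hImI : MemLp (fun ω => (Y ω : ℂ) * I) 2 μ := by
      simpa only [mul_comm] using hIm.const_mul I
    simp only [mk_eq_add_mul_I]
    exact hRe.add hImI
  · simp only [mk_eq_add_mul_I]
    rw [integral_add hX₁ hY₁, integral_mul_const, integral_complex_ofReal, integral_complex_ofReal,
      hX.integral_eq, hY.integral_eq, integral_id_gaussianReal]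
    simp
  · have halves_add : (((v / 2).toNNReal : ℝ≥0) : ℝ) + (v / 2).toNNReal = v.toNNReal := by
      rw [Real.toNNReal_div' zero_le_two]
      push_cast
      simp
    simp only [normSq_mk, ← sq]
    rw [integral_add hX₂.integrable_sq hY₂.integrable_sq, integral_sq_of_hasLaw_gaussianReal hX,
      integral_sq_of_hasLaw_gaussianReal hY, halves_add]

theorem integral_exp_sum_of_iIndepFun_gaussianReal {ι : Type*} {X : ι → Ω → ℝ} {v : ℝ≥0}
    (hX : ∀ i, HasLaw (X i) (gaussianReal 0 v) μ) (hind : iIndepFun X μ) (s : Finset ι) :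
    ∫ ω, cexp (I * ((∑ i ∈ s, X i ω : ℝ) : ℂ)) ∂μ = (Real.exp (-(v / 2) * s.card) : ℂ) := by
  have hchar := congrFun ((hind.restrict s).charFun_map_fun_finsetSum_eq_prod
    fun i _ => (hX i).aemeasurable) 1
  rw [charFun_apply_real, integral_map (Finset.aemeasurable_fun_sum s fun i _ =>
    (hX i).aemeasurable) (by fun_prop), Finset.prod_apply] at hchar
  simp only [(hX _).map_eq, charFun_gaussianReal, Finset.prod_const] at hchar
  simp only [ofReal_one, one_mul, mul_comm _ I] at hchar
  rw [hchar, ← Complex.exp_nat_mul]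
  push_cast
  ring_nf

end Moments

theorem measurable_complex_mk {Ω : Type*} {_ : MeasurableSpace Ω} {X Y : Ω → ℝ}
    (hX : Measurable X) (hY : Measurable Y) : Measurable fun ω => Complex.mk (X ω) (Y ω) :=
  measurableEquivRealProd.symm.measurable.comp (hX.prodMk hY)

theorem indepFun_of_measurable_iSup_comap {Ω ι : Type*} {mΩ : MeasurableSpace Ω} {μ : Measure Ω}
    {β : ι → Type*} [∀ i, MeasurableSpace (β i)] {γ γ' : Type*} [MeasurableSpace γ]
    [MeasurableSpace γ'] {X : ∀ i, Ω → β i} {F : Ω → γ} {G : Ω → γ'} {S T : Set ι}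
    (hind : iIndepFun X μ) (hX : ∀ i, Measurable (X i)) (hST : Disjoint S T)
    (hF : Measurable[⨆ i ∈ S, MeasurableSpace.comap (X i) inferInstance] F)
    (hG : Measurable[⨆ i ∈ T, MeasurableSpace.comap (X i) inferInstance] G) :
    IndepFun F G μ := by
  rw [IndepFun_iff_Indep]
  exact indep_of_indep_of_le_left (indep_of_indep_of_le_right
    (indep_iSup_of_disjoint (fun i => (hX i).comap_le) hind hST) hG.comap_le) hF.comap_le

end GeneralLemmas

theorem Xmat_apply {B : ℕ} (κ δ : ℝ) (v : Fin B → ℂ) (b b' : Fin B) :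
    Xmat κ δ v b b' = v b * star (v b') * (Real.exp (-(δ / 2) * |(b : ℝ) - b'|) : ℂ)
      + if b = b' then ((κ ^ 2 * normSq (v b) : ℝ) : ℂ) else 0 := by
  rw [Xmat, of_apply]
  split_ifs with heq
  · subst heq
    rw [star_def, mul_conj, sub_self, abs_zero, mul_zero, Real.exp_zero]
    push_cast
    ring
  · rw [add_zero]

namespace MIMOModel

variable {Ω : Type*} [MeasureSpace Ω] {N B L K : ℕ} {lam : Fin L → Fin K → ℝ}
  {σ2 ξ κ δ : ℝ} {x : Fin L → Fin K → Fin B → ℂ}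
  (M : MIMOModel Ω N B L K lam σ2 ξ κ δ x)

section Sources

/-- The mutually independent random inputs of the model. The real and imaginary parts of a complex
input form a single source. -/
inductive Source (N L K : ℕ)
  | channel (l : Fin L) (k : Fin K) (n : Fin N)
  | drift (n : Fin N) (u : ℕ)
  | distortion (n : Fin N) (s : ℕ)
  | noise (n : Fin N) (s : ℕ)

/-- Index set of the real Gaussian variables in `MIMOModel.indep`; the Boolean is `false` for a real
part and `true` for an imaginary part. -/
abbrev RealIndex (N L K : ℕ) :=
  (Fin L × Fin K × Fin N × Bool) ⊕ (Fin N × ℕ) ⊕ (Fin N × ℕ × Bool) ⊕ (Fin N × ℕ × Bool)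

/-- The source to which a real Gaussian variable contributes. -/
def RealIndex.source : RealIndex N L K → Source N L K
  | .inl (l, k, n, _) => .channel l k n
  | .inr (.inl (n, u)) => .drift n u
  | .inr (.inr (.inl (n, s, _))) => .distortion n s
  | .inr (.inr (.inr (n, s, _))) => .noise n s

/-- The family of real Gaussian variables whose independence is `MIMOModel.indep`. -/
def realVar : RealIndex N L K → Ω → ℝ
  | .inl (l, k, n, false) => M.hRe l k n
  | .inl (l, k, n, true) => M.hIm l k n
  | .inr (.inl (n, u)) => M.dphi n u
  | .inr (.inr (.inl (n, s, false))) => M.zRe n s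
  | .inr (.inr (.inl (n, s, true))) => M.zIm n s
  | .inr (.inr (.inr (n, s, false))) => M.etaRe n s
  | .inr (.inr (.inr (n, s, true))) => M.etaIm n s

theorem iIndepFun_realVar : iIndepFun M.realVar (ℙ : Measure Ω) :=
  M.indep

theorem measurable_realVar : ∀ i, Measurable (M.realVar i)
  | .inl (l, k, n, false) => M.meas_hRe l k n
  | .inl (l, k, n, true) => M.meas_hIm l k n
  | .inr (.inl (n, u)) => M.meas_dphi n u
  | .inr (.inr (.inl (n, s, false))) => M.meas_zRe n s
  | .inr (.inr (.inl (n, s, true))) => M.meas_zIm n s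
  | .inr (.inr (.inr (n, s, false))) => M.meas_etaRe n s
  | .inr (.inr (.inr (n, s, true))) => M.meas_etaIm n s

/-- The σ-algebra generated by a set of sources. -/
@[reducible]
def sigma (S : Set (Source N L K)) : MeasurableSpace Ω :=
  ⨆ i ∈ RealIndex.source ⁻¹' S, MeasurableSpace.comap (M.realVar i) inferInstance

variable {M} {S T : Set (Source N L K)}

theorem sigma_le : M.sigma S ≤ MeasureSpace.toMeasurableSpace :=
  iSup₂_le fun i _ => (M.measurable_realVar i).comap_le

theorem measurable_realVar_of_mem {i : RealIndex N L K} (hi : i.source ∈ S) :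
    Measurable[M.sigma S] (M.realVar i) :=
  measurable_iff_comap_le.2
    (le_iSup₂_of_le (f := fun i _ => MeasurableSpace.comap (M.realVar i) _) i hi le_rfl)

theorem indepFun_of_disjoint {β γ : Type*} [MeasurableSpace β] [MeasurableSpace γ] {F : Ω → β}
    {G : Ω → γ} (hST : Disjoint S T) (hF : Measurable[M.sigma S] F) (hG : Measurable[M.sigma T] G) :
    IndepFun F G ℙ :=
  indepFun_of_measurable_iSup_comap M.iIndepFun_realVar M.measurable_realVar
    (hST.preimage RealIndex.source) hF hG

theorem integral_mul_star_eq_zero_of_source {i : Source N L K} {F W : Ω → ℂ}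
    (hF : Measurable[M.sigma {i}ᶜ] F) (hW : Measurable[M.sigma {i}] W) (hW₀ : ∫ ω, W ω = 0) :
    ∫ ω, F ω * star (W ω) = 0 :=
  integral_mul_star_eq_zero_of_indepFun (indepFun_of_disjoint disjoint_compl_left hF hW)
    (hF.mono sigma_le le_rfl) (hW.mono sigma_le le_rfl) hW₀

theorem measurable_ch {l : Fin L} {k : Fin K} {n : Fin N} (h : .channel l k n ∈ S) :
    Measurable[M.sigma S] (M.ch l k n) :=
  measurable_complex_mk (measurable_realVar_of_mem (i := .inl (l, k, n, false)) h)
    (measurable_realVar_of_mem (i := .inl (l, k, n, true)) h)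

theorem measurable_z {n : Fin N} {s : ℕ} (h : .distortion n s ∈ S) :
    Measurable[M.sigma S] (M.z n s) :=
  measurable_complex_mk (measurable_realVar_of_mem (i := .inr (.inr (.inl (n, s, false)))) h)
    (measurable_realVar_of_mem (i := .inr (.inr (.inl (n, s, true)))) h)

theorem measurable_eta {n : Fin N} {s : ℕ} (h : .noise n s ∈ S) :
    Measurable[M.sigma S] (M.eta n s) :=
  measurable_complex_mk (measurable_realVar_of_mem (i := .inr (.inr (.inr (n, s, false)))) h)
    (measurable_realVar_of_mem (i := .inr (.inr (.inr (n, s, true)))) h)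

/-- The unit-modulus factor `e^{iφ_{jn}(s)}` by which the phase drift rotates the channel. -/
noncomputable def phasor (M : MIMOModel Ω N B L K lam σ2 ξ κ δ x) (n : Fin N) (s : ℕ) (ω : Ω) :
    ℂ :=
  cexp (I * M.phase n s ω)

theorem measurable_phasor {n : Fin N} (h : ∀ u, .drift n u ∈ S) (s : ℕ) :
    Measurable[M.sigma S] (M.phasor n s) := by
  have hphase : Measurable[M.sigma S] (M.phase n s) :=
    Finset.measurable_fun_sum _ fun u _ => measurable_realVar_of_mem (i := .inr (.inl (n, u))) (h u)
  exact measurable_exp.comp ((measurable_ofReal.comp hphase).const_mul I)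

theorem hEff_eq_phasor_mul_ch (l : Fin L) (k : Fin K) (s : ℕ) (n : Fin N) (ω : Ω) :
    M.hEff l k s n ω = M.phasor n s ω * M.ch l k n ω :=
  rfl

theorem measurable_hEff {l : Fin L} {k : Fin K} {n : Fin N} (hu : ∀ u, .drift n u ∈ S)
    (hh : .channel l k n ∈ S) (s : ℕ) : Measurable[M.sigma S] (M.hEff l k s n) :=
  (measurable_phasor hu s).mul (measurable_ch hh)

/-- The power `Σ_l Σ_m p_{lm} |h_{jlm}^{(n)}|²` received through the channels at antenna `n` when
user `m` of cell `l` transmits with power `p l m`; the distortion has this conditional variance, up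
to the factor `κ²`. -/
noncomputable def receivedPower (M : MIMOModel Ω N B L K lam σ2 ξ κ δ x)
    (p : Fin L → Fin K → ℝ) (n : Fin N) (ω : Ω) : ℝ :=
  ∑ l, ∑ m, p l m * normSq (M.ch l m n ω)

theorem ups_eq_sqrt_receivedPower_mul_z (p : Fin L → Fin K → ℝ) (s : ℕ) (n : Fin N) (ω : Ω) :
    M.ups p s n ω = κ * (√(M.receivedPower p n ω) : ℂ) * M.z n s ω :=
  rfl

theorem measurable_receivedPower (p : Fin L → Fin K → ℝ) {n : Fin N}
    (hh : ∀ l k, .channel l k n ∈ S) : Measurable[M.sigma S] (M.receivedPower p n) :=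
  Finset.measurable_fun_sum _ fun l _ => Finset.measurable_fun_sum _ fun m _ =>
    (continuous_normSq.measurable.comp (measurable_ch (hh l m))).const_mul _

theorem measurable_sqrt_receivedPower (p : Fin L → Fin K → ℝ) {n : Fin N}
    (hh : ∀ l k, .channel l k n ∈ S) :
    Measurable[M.sigma S] fun ω => κ * (√(M.receivedPower p n ω) : ℂ) :=
  (measurable_ofReal.comp
    (Real.continuous_sqrt.measurable.comp (measurable_receivedPower p hh))).const_mul _

theorem measurable_ups (p : Fin L → Fin K → ℝ) {n : Fin N} {s : ℕ}
    (hh : ∀ l k, .channel l k n ∈ S) (hz : .distortion n s ∈ S) :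
    Measurable[M.sigma S] (M.ups p s n) :=
  (measurable_sqrt_receivedPower p hh).mul (measurable_z hz)

end Sources

section SecondOrderStatistics

theorem isCenteredWithVariance_ch (l : Fin L) (k : Fin K) (n : Fin N) :
    IsCenteredWithVariance (M.ch l k n) (lam l k).toNNReal ℙ :=
  isCenteredWithVariance_mk ⟨(M.meas_hRe l k n).aemeasurable, M.law_hRe l k n⟩
    ⟨(M.meas_hIm l k n).aemeasurable, M.law_hIm l k n⟩

theorem isCenteredWithVariance_z (n : Fin N) (s : ℕ) :
    IsCenteredWithVariance (M.z n s) 1 ℙ :=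
  Real.toNNReal_one ▸ isCenteredWithVariance_mk ⟨(M.meas_zRe n s).aemeasurable, M.law_zRe n s⟩
    ⟨(M.meas_zIm n s).aemeasurable, M.law_zIm n s⟩

theorem isCenteredWithVariance_eta (n : Fin N) (s : ℕ) :
    IsCenteredWithVariance (M.eta n s) (σ2 * ξ).toNNReal ℙ :=
  isCenteredWithVariance_mk ⟨(M.meas_etaRe n s).aemeasurable, M.law_etaRe n s⟩
    ⟨(M.meas_etaIm n s).aemeasurable, M.law_etaIm n s⟩

theorem phase_sub_phase (n : Fin N) {r s : ℕ} (hrs : r ≤ s) (ω : Ω) :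
    M.phase n s ω - M.phase n r ω = ∑ u ∈ Finset.Ioc r s, M.dphi n u ω := by
  have hIcc (q : ℕ) : Finset.Icc 1 q = Finset.Ioc 0 q := rfl
  rw [phase, phase, hIcc, hIcc, sub_eq_iff_eq_add',
    Finset.sum_Ioc_consecutive _ (Nat.zero_le r) hrs]

theorem phasor_mul_star_phasor (n : Fin N) (s r : ℕ) (ω : Ω) :
    M.phasor n s ω * star (M.phasor n r ω)
      = cexp (I * ((M.phase n s ω - M.phase n r ω : ℝ) : ℂ)) := by
  rw [phasor, phasor, star_def, ← exp_conj, ← Complex.exp_add, map_mul, conj_I, conj_ofReal]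
  push_cast
  ring_nf

theorem integral_phasor_mul_star_phasor (hδ : 0 ≤ δ) (n : Fin N) (s r : ℕ) :
    ∫ ω, M.phasor n s ω * star (M.phasor n r ω)
      = (Real.exp (-(δ / 2) * |(s : ℝ) - r|) : ℂ) := by
  wlog hrs : r ≤ s generalizing s r with hwlog
  · have hconj := congrArg star (hwlog r s (le_of_not_ge hrs))
    rw [star_def, ← integral_conj, conj_ofReal, abs_sub_comm] at hconj
    simpa only [map_mul, star_def, conj_conj, mul_comm] using hconj
  have hind : iIndepFun (M.dphi n) (ℙ : Measure Ω) :=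
    M.iIndepFun_realVar.precomp (g := fun u => .inr (.inl (n, u))) fun u v huv => by simpa using huv
  simp only [phasor_mul_star_phasor, phase_sub_phase _ _ hrs]
  rw [integral_exp_sum_of_iIndepFun_gaussianReal
    (fun u => ⟨(M.meas_dphi n u).aemeasurable, M.law_dphi n u⟩) hind, Nat.card_Ioc,
    Real.coe_toNNReal _ hδ, Nat.cast_sub hrs, abs_of_nonneg (sub_nonneg.2 (Nat.cast_le.2 hrs))]

theorem norm_phasor (n : Fin N) (s : ℕ) (ω : Ω) : ‖M.phasor n s ω‖ = 1 := by
  rw [phasor, mul_comm, norm_exp_ofReal_mul_I]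

theorem memLp_hEff (l : Fin L) (k : Fin K) (s : ℕ) (n : Fin N) : MemLp (M.hEff l k s n) 2 ℙ := by
  have hmeas : Measurable (M.hEff l k s n) :=
    (measurable_hEff (fun u => Set.mem_univ _) (Set.mem_univ _) s).mono sigma_le le_rfl
  refine (M.isCenteredWithVariance_ch l k n).memLp.of_le hmeas.aestronglyMeasurable
    (ae_of_all _ fun ω => ?_)
  rw [hEff_eq_phasor_mul_ch, norm_mul, norm_phasor, one_mul]

theorem integral_hEff_mul_star_hEff (hlam : ∀ l k, 0 ≤ lam l k) (hδ : 0 ≤ δ) (l l' : Fin L)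
    (k k' : Fin K) (s r : ℕ) (n n' : Fin N) :
    ∫ ω, M.hEff l k s n ω * star (M.hEff l' k' r n' ω)
      = if (l, k, n) = (l', k', n') then (lam l k : ℂ) * (Real.exp (-(δ / 2) * |(s : ℝ) - r|) : ℂ)
        else 0 := by
  split_ifs with heq
  · obtain ⟨rfl, rfl, rfl⟩ : l = l' ∧ k = k' ∧ n = n' := by simpa only [Prod.mk.injEq] using heq
    have hrot : Measurable[M.sigma {.channel l k n}ᶜ]
        fun ω => M.phasor n s ω * star (M.phasor n r ω) :=
      (measurable_phasor (by simp) s).mul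
        (continuous_star.measurable.comp (measurable_phasor (by simp) r))
    have hgain : Measurable[M.sigma {.channel l k n}] fun ω => M.ch l k n ω * star (M.ch l k n ω) :=
      (measurable_ch (by simp)).mul (continuous_star.measurable.comp (measurable_ch (by simp)))
    calc ∫ ω, M.hEff l k s n ω * star (M.hEff l k r n ω)
        = ∫ ω, M.phasor n s ω * star (M.phasor n r ω) * (M.ch l k n ω * star (M.ch l k n ω)) := by
          simp only [hEff_eq_phasor_mul_ch, star_mul']
          exact integral_congr_ae (ae_of_all _ fun ω => by ring)
      _ = (∫ ω, M.phasor n s ω * star (M.phasor n r ω))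
            * ∫ ω, M.ch l k n ω * star (M.ch l k n ω) :=
          (indepFun_of_disjoint disjoint_compl_left hrot hgain).integral_fun_mul_eq_mul_integral
            (hrot.mono sigma_le le_rfl).aestronglyMeasurable
            (hgain.mono sigma_le le_rfl).aestronglyMeasurable
      _ = _ := by
          rw [M.integral_phasor_mul_star_phasor hδ, integral_mul_star_self,
            (M.isCenteredWithVariance_ch l k n).integral_normSq, Real.coe_toNNReal _ (hlam l k),
            mul_comm]
  · have hF : Measurable[M.sigma {.channel l' k' n'}ᶜ]
        fun ω => M.hEff l k s n ω * star (M.phasor n' r ω) :=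
      (measurable_hEff (by simp) (by simpa using heq) s).mul
        (continuous_star.measurable.comp (measurable_phasor (by simp) r))
    rw [← integral_mul_star_eq_zero_of_source hF (measurable_ch (Set.mem_singleton _))
      (M.isCenteredWithVariance_ch l' k' n').integral_eq_zero]
    simp only [hEff_eq_phasor_mul_ch, star_mul', mul_assoc]

theorem normSq_ups {p : Fin L → Fin K → ℝ} (hp : ∀ l k, 0 ≤ p l k) (s : ℕ) (n : Fin N) (ω : Ω) :
    normSq (M.ups p s n ω) = κ ^ 2 * (M.receivedPower p n ω * normSq (M.z n s ω)) := by
  have hpower : 0 ≤ M.receivedPower p n ω :=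
    Finset.sum_nonneg fun l _ => Finset.sum_nonneg fun k _ => mul_nonneg (hp l k) (normSq_nonneg _)
  rw [ups_eq_sqrt_receivedPower_mul_z, normSq_mul, normSq_mul, normSq_ofReal, normSq_ofReal,
    Real.mul_self_sqrt hpower]
  ring

theorem indepFun_receivedPower_normSq_z (p : Fin L → Fin K → ℝ) (s : ℕ) (n : Fin N) :
    IndepFun (M.receivedPower p n) (fun ω => normSq (M.z n s ω)) ℙ :=
  indepFun_of_disjoint (M := M) (S := {.distortion n s}ᶜ) (T := {.distortion n s})
    disjoint_compl_left (measurable_receivedPower p (by simp))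
    (continuous_normSq.measurable.comp (measurable_z (by simp)))

theorem integrable_normSq_ch (l : Fin L) (k : Fin K) (n : Fin N) :
    Integrable (fun ω => normSq (M.ch l k n ω)) ℙ :=
  integrable_normSq_of_memLp_two (M.isCenteredWithVariance_ch l k n).memLp

theorem integrable_normSq_z (n : Fin N) (s : ℕ) : Integrable (fun ω => normSq (M.z n s ω)) ℙ :=
  integrable_normSq_of_memLp_two (M.isCenteredWithVariance_z n s).memLp

theorem integrable_receivedPower (p : Fin L → Fin K → ℝ) (n : Fin N) :
    Integrable (M.receivedPower p n) ℙ :=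
  integrable_finsetSum _ fun l _ => integrable_finsetSum _ fun k _ =>
    (M.integrable_normSq_ch l k n).const_mul _

theorem integral_receivedPower (hlam : ∀ l k, 0 ≤ lam l k) (p : Fin L → Fin K → ℝ) (n : Fin N) :
    ∫ ω, M.receivedPower p n ω = ∑ l, ∑ k, p l k * lam l k := by
  have hint (l : Fin L) (k : Fin K) : Integrable (fun ω => p l k * normSq (M.ch l k n ω)) ℙ :=
    (M.integrable_normSq_ch l k n).const_mul _
  simp only [receivedPower]
  rw [integral_finsetSum _ fun l _ => integrable_finsetSum _ fun k _ => hint l k]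
  simp only [integral_finsetSum _ fun k _ => hint _ k, integral_const_mul,
    (M.isCenteredWithVariance_ch _ _ n).integral_normSq, Real.coe_toNNReal _ (hlam _ _)]

theorem memLp_ups {p : Fin L → Fin K → ℝ} (hp : ∀ l k, 0 ≤ p l k) (s : ℕ) (n : Fin N) :
    MemLp (M.ups p s n) 2 ℙ := by
  have hmeas : Measurable (M.ups p s n) :=
    (measurable_ups p (fun l k => Set.mem_univ _) (Set.mem_univ _)).mono sigma_le le_rfl
  rw [memLp_two_iff_integrable_sq_norm hmeas.aestronglyMeasurable]
  simp only [← normSq_eq_norm_sq, M.normSq_ups hp]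
  exact ((M.indepFun_receivedPower_normSq_z p s n).integrable_mul (M.integrable_receivedPower p n)
    (M.integrable_normSq_z n s)).const_mul _

theorem integral_normSq_ups (hlam : ∀ l k, 0 ≤ lam l k) {p : Fin L → Fin K → ℝ}
    (hp : ∀ l k, 0 ≤ p l k) (s : ℕ) (n : Fin N) :
    ∫ ω, normSq (M.ups p s n ω) = κ ^ 2 * ∑ l, ∑ k, p l k * lam l k := by
  simp only [M.normSq_ups hp]
  rw [integral_const_mul, (M.indepFun_receivedPower_normSq_z p s n).integral_fun_mul_eq_mul_integral
    (M.integrable_receivedPower p n).aestronglyMeasurable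
    (M.integrable_normSq_z n s).aestronglyMeasurable, M.integral_receivedPower hlam,
    (M.isCenteredWithVariance_z n s).integral_normSq, NNReal.coe_one, mul_one]

variable {M} in
theorem integral_mul_star_ups_eq_zero {F : Ω → ℂ} {n : Fin N} {s : ℕ}
    (hF : Measurable[M.sigma {.distortion n s}ᶜ] F) (p : Fin L → Fin K → ℝ) :
    ∫ ω, F ω * star (M.ups p s n ω) = 0 := by
  have hFP : Measurable[M.sigma {.distortion n s}ᶜ]
      fun ω => F ω * star (κ * (√(M.receivedPower p n ω) : ℂ)) :=
    hF.mul (continuous_star.measurable.comp (measurable_sqrt_receivedPower p (by simp)))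
  rw [← integral_mul_star_eq_zero_of_source hFP (measurable_z (Set.mem_singleton _))
    (M.isCenteredWithVariance_z n s).integral_eq_zero]
  simp only [ups_eq_sqrt_receivedPower_mul_z, star_mul', mul_assoc]

variable {M} in
theorem integral_mul_star_eta_eq_zero {F : Ω → ℂ} {n : Fin N} {s : ℕ}
    (hF : Measurable[M.sigma {.noise n s}ᶜ] F) : ∫ ω, F ω * star (M.eta n s ω) = 0 :=
  integral_mul_star_eq_zero_of_source hF (measurable_eta (Set.mem_singleton _))
    (M.isCenteredWithVariance_eta n s).integral_eq_zero

end SecondOrderStatistics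

section HilbertSpace

open scoped InnerProductSpace

/-- The effective channel `M.hEff l k s n` as a vector of `L²(Ω; ℂ)`. -/
noncomputable def hEffLp (l : Fin L) (k : Fin K) (s : ℕ) (n : Fin N) : Ω →₂[ℙ] ℂ :=
  (M.memLp_hEff l k s n).toLp

/-- The distortion of the pilot signal at antenna `n` and pilot time `b + 1`, as a vector of
`L²(Ω; ℂ)`: the distortion `M.ups` at the instantaneous pilot powers `|x_{lm}(b)|²`. -/
noncomputable def pilotDistortionLp (n : Fin N) (b : Fin B) : Ω →₂[ℙ] ℂ :=
  (M.memLp_ups (fun l m => normSq_nonneg (x l m b)) (b + 1) n).toLp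

/-- The receiver noise at antenna `n` and pilot time `b + 1`, as a vector of `L²(Ω; ℂ)`. -/
noncomputable def etaLp (n : Fin N) (b : Fin B) : Ω →₂[ℙ] ℂ :=
  (M.isCenteredWithVariance_eta n (b + 1)).memLp.toLp

theorem coeFn_hEffLp (l : Fin L) (k : Fin K) (s : ℕ) (n : Fin N) :
    M.hEffLp l k s n =ᵐ[ℙ] M.hEff l k s n :=
  MemLp.coeFn_toLp _

theorem coeFn_pilotDistortionLp (n : Fin N) (b : Fin B) :
    M.pilotDistortionLp n b =ᵐ[ℙ] M.ups (fun l m => normSq (x l m b)) (b + 1) n :=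
  MemLp.coeFn_toLp _

theorem coeFn_etaLp (n : Fin N) (b : Fin B) : M.etaLp n b =ᵐ[ℙ] M.eta n (b + 1) :=
  MemLp.coeFn_toLp _

/-- The received pilot signal without receiver noise, as a vector of `L²(Ω; ℂ)`. -/
noncomputable def signalLp (n : Fin N) (b : Fin B) : Ω →₂[ℙ] ℂ :=
  ∑ l, ∑ m, x l m b • M.hEffLp l m (b + 1) n + M.pilotDistortionLp n b

/-- The received pilot signal `M.y n b` as a vector of `L²(Ω; ℂ)`. -/
noncomputable def yLp (n : Fin N) (b : Fin B) : Ω →₂[ℙ] ℂ :=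
  M.signalLp n b + M.etaLp n b

theorem inner_hEffLp (hlam : ∀ l k, 0 ≤ lam l k) (hδ : 0 ≤ δ) (l l' : Fin L) (k k' : Fin K)
    (s r : ℕ) (n n' : Fin N) :
    ⟪M.hEffLp l' k' r n', M.hEffLp l k s n⟫_ℂ
      = if (l, k, n) = (l', k', n') then (lam l k : ℂ) * (Real.exp (-(δ / 2) * |(s : ℝ) - r|) : ℂ)
        else 0 := by
  rw [← M.integral_hEff_mul_star_hEff hlam hδ]
  exact (integral_mul_star_eq_inner (M.coeFn_hEffLp l k s n) (M.coeFn_hEffLp l' k' r n')).symm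

theorem inner_pilotDistortionLp_hEffLp (l : Fin L) (k : Fin K) (s : ℕ) (n n' : Fin N) (b : Fin B) :
    ⟪M.pilotDistortionLp n' b, M.hEffLp l k s n⟫_ℂ = 0 :=
  (integral_mul_star_eq_inner (M.coeFn_hEffLp l k s n)
    (M.coeFn_pilotDistortionLp n' b)).symm.trans <|
    integral_mul_star_ups_eq_zero (measurable_hEff (by simp) (by simp) s) _

theorem inner_etaLp_hEffLp (l : Fin L) (k : Fin K) (s : ℕ) (n n' : Fin N) (b : Fin B) :
    ⟪M.etaLp n' b, M.hEffLp l k s n⟫_ℂ = 0 :=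
  (integral_mul_star_eq_inner (M.coeFn_hEffLp l k s n) (M.coeFn_etaLp n' b)).symm.trans <|
    integral_mul_star_eta_eq_zero (measurable_hEff (by simp) (by simp) s)

theorem inner_etaLp_pilotDistortionLp (n n' : Fin N) (b b' : Fin B) :
    ⟪M.etaLp n' b', M.pilotDistortionLp n b⟫_ℂ = 0 :=
  (integral_mul_star_eq_inner (M.coeFn_pilotDistortionLp n b) (M.coeFn_etaLp n' b')).symm.trans <|
    integral_mul_star_eta_eq_zero (measurable_ups _ (by simp) (by simp))

theorem inner_pilotDistortionLp (hlam : ∀ l k, 0 ≤ lam l k) (n n' : Fin N) (b b' : Fin B) :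
    ⟪M.pilotDistortionLp n' b', M.pilotDistortionLp n b⟫_ℂ
      = if (n, b) = (n', b') then ((κ ^ 2 * ∑ l, ∑ m, normSq (x l m b) * lam l m : ℝ) : ℂ)
        else 0 := by
  refine (integral_mul_star_eq_inner (M.coeFn_pilotDistortionLp n b)
    (M.coeFn_pilotDistortionLp n' b')).symm.trans ?_
  split_ifs with heq
  · obtain ⟨rfl, rfl⟩ : n = n' ∧ b = b' := by simpa only [Prod.mk.injEq] using heq
    rw [integral_mul_star_self, M.integral_normSq_ups hlam fun l m => normSq_nonneg (x l m b)]
  · refine integral_mul_star_ups_eq_zero (measurable_ups _ (by simp) ?_) _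
    simpa [Fin.val_inj] using heq

theorem inner_etaLp (hσξ : 0 ≤ σ2 * ξ) (n n' : Fin N) (b b' : Fin B) :
    ⟪M.etaLp n' b', M.etaLp n b⟫_ℂ = if (n, b) = (n', b') then ((σ2 * ξ : ℝ) : ℂ) else 0 := by
  refine (integral_mul_star_eq_inner (M.coeFn_etaLp n b) (M.coeFn_etaLp n' b')).symm.trans ?_
  split_ifs with heq
  · obtain ⟨rfl, rfl⟩ : n = n' ∧ b = b' := by simpa only [Prod.mk.injEq] using heq
    rw [integral_mul_star_self, (M.isCenteredWithVariance_eta n (b + 1)).integral_normSq,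
      Real.coe_toNNReal _ hσξ]
  · refine integral_mul_star_eta_eq_zero (measurable_eta ?_)
    simpa [Fin.val_inj] using heq

theorem inner_hEffLp_signalLp (hlam : ∀ l k, 0 ≤ lam l k) (hδ : 0 ≤ δ) (l : Fin L) (k : Fin K)
    (s : ℕ) (n n' : Fin N) (b : Fin B) :
    ⟪M.hEffLp l k s n', M.signalLp n b⟫_ℂ
      = if n = n' then x l k b * (lam l k * (Real.exp (-(δ / 2) * |(b : ℝ) + 1 - s|) : ℂ))
        else 0 := by
  have hdist : ⟪M.hEffLp l k s n', M.pilotDistortionLp n b⟫_ℂ = 0 :=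
    inner_eq_zero_symm.1 (M.inner_pilotDistortionLp_hEffLp l k s n' n b)
  simp only [signalLp, inner_add_right, inner_sum, inner_smul_right, M.inner_hEffLp hlam hδ, hdist]
  simp [ite_and]

theorem inner_pilotDistortionLp_signalLp (hlam : ∀ l k, 0 ≤ lam l k) (n n' : Fin N)
    (b b' : Fin B) :
    ⟪M.pilotDistortionLp n' b', M.signalLp n b⟫_ℂ
      = if (n, b) = (n', b') then ((κ ^ 2 * ∑ l, ∑ m, normSq (x l m b) * lam l m : ℝ) : ℂ)
        else 0 := by
  simp only [signalLp, inner_add_right, inner_sum, inner_smul_right,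
    M.inner_pilotDistortionLp_hEffLp, mul_zero, Finset.sum_const_zero, zero_add,
    M.inner_pilotDistortionLp hlam]

theorem inner_etaLp_signalLp (n n' : Fin N) (b b' : Fin B) :
    ⟪M.etaLp n' b', M.signalLp n b⟫_ℂ = 0 := by
  simp only [signalLp, inner_add_right, inner_sum, inner_smul_right, M.inner_etaLp_hEffLp,
    M.inner_etaLp_pilotDistortionLp, mul_zero, Finset.sum_const_zero, add_zero]

theorem inner_signalLp (hlam : ∀ l k, 0 ≤ lam l k) (hδ : 0 ≤ δ) (n n' : Fin N) (b b' : Fin B) :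
    ⟪M.signalLp n' b', M.signalLp n b⟫_ℂ
      = if n = n' then (∑ l, ∑ m, (lam l m : ℂ) • Xmat κ δ (x l m)) b b' else 0 := by
  conv_lhs => rw [signalLp]
  simp only [inner_add_left, sum_inner, inner_smul_left, M.inner_hEffLp_signalLp hlam hδ,
    M.inner_pilotDistortionLp_signalLp hlam]
  rcases eq_or_ne n n' with rfl | hn
  · have hshift : (b : ℝ) + 1 - ((b' + 1 : ℕ) : ℝ) = b - b' := by
      push_cast
      ring
    simp only [Matrix.sum_apply, Matrix.smul_apply, Xmat_apply, hshift, if_true, Prod.mk.injEq,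
      true_and, ofReal_mul, ofReal_sum, Finset.mul_sum, smul_eq_mul, star_def]
    split_ifs
    · simp only [← Finset.sum_add_distrib]
      exact Finset.sum_congr rfl fun l _ => Finset.sum_congr rfl fun m _ => by ring
    · simp only [add_zero]
      exact Finset.sum_congr rfl fun l _ => Finset.sum_congr rfl fun m _ => by ring
  · simp [hn]

theorem inner_yLp (hlam : ∀ l k, 0 ≤ lam l k) (hδ : 0 ≤ δ) (hσξ : 0 ≤ σ2 * ξ) (n n' : Fin N)
    (b b' : Fin B) :
    ⟪M.yLp n' b', M.yLp n b⟫_ℂ = if n = n' then PsiMat lam σ2 ξ κ δ x b b' else 0 := by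
  have hcross : ⟪M.signalLp n' b', M.etaLp n b⟫_ℂ = 0 :=
    inner_eq_zero_symm.1 (M.inner_etaLp_signalLp n' n b' b)
  rw [yLp, yLp, inner_add_left, inner_add_right, inner_add_right, M.inner_signalLp hlam hδ,
    M.inner_etaLp_signalLp, hcross, M.inner_etaLp hσξ, PsiMat]
  by_cases hn : n = n' <;> simp [hn, one_apply]

theorem inner_yLp_hEffLp (hlam : ∀ l k, 0 ≤ lam l k) (hδ : 0 ≤ δ) (l : Fin L) (k : Fin K)
    {t : ℕ} (ht : B ≤ t) (n n' : Fin N) (b : Fin B) :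
    ⟪M.yLp n' b, M.hEffLp l k t n⟫_ℂ
      = if n = n' then ((lam l k : ℂ) • (star (x l k) ᵥ* Dmat δ t B)) b else 0 := by
  have hpast : |(b : ℝ) + 1 - t| = t - (b + 1) := by
    rw [abs_sub_comm, abs_of_nonneg]
    rw [sub_nonneg]
    exact_mod_cast b.isLt.trans_le ht
  rw [yLp, inner_add_left, M.inner_etaLp_hEffLp, add_zero, ← inner_conj_symm,
    M.inner_hEffLp_signalLp hlam hδ, hpast, Dmat]
  rcases eq_or_ne n n' with rfl | hn
  · simp only [if_true, map_mul, conj_ofReal, Pi.smul_apply, vecMul_diagonal, Pi.star_apply,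
      smul_eq_mul, star_def]
    ring
  · simp [hn, hn.symm]

theorem sum_smul_Xmat_eq_transpose_gram (hlam : ∀ l k, 0 ≤ lam l k) (hδ : 0 ≤ δ) (n : Fin N) :
    ∑ l, ∑ m, (lam l m : ℂ) • Xmat κ δ (x l m) = (gram ℂ (M.signalLp n))ᵀ := by
  ext b b'
  rw [transpose_apply, gram_apply, M.inner_signalLp hlam hδ, if_pos rfl]

open scoped ComplexOrder in
theorem isUnit_PsiMat (M : MIMOModel Ω N B L K lam σ2 ξ κ δ x) (hlam : ∀ l k, 0 ≤ lam l k)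
    (hδ : 0 ≤ δ) (hσξ : 0 < σ2 * ξ) (n : Fin N) : IsUnit (PsiMat lam σ2 ξ κ δ x) := by
  have hsignal : (∑ l, ∑ m, (lam l m : ℂ) • Xmat κ δ (x l m)).PosSemidef :=
    M.sum_smul_Xmat_eq_transpose_gram hlam hδ n ▸ (posSemidef_gram ℂ _).transpose
  have hnoise : (((σ2 * ξ : ℝ) : ℂ) • (1 : Matrix (Fin B) (Fin B) ℂ)).PosDef :=
    PosDef.one.smul (by exact_mod_cast hσξ)
  exact (PosDef.posSemidef_add hsignal hnoise).isUnit

/-- The estimation error `M.hEff l k t n - M.hHat l k t n` as a vector of `L²(Ω; ℂ)`, in the form of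
the residual of the linear estimator. -/
noncomputable def errorLp (l : Fin L) (k : Fin K) (t : ℕ) (n : Fin N) : Ω →₂[ℙ] ℂ :=
  M.hEffLp l k t n
    - ∑ b, (((lam l k : ℂ) • (star (x l k) ᵥ* Dmat δ t B)) ᵥ* (PsiMat lam σ2 ξ κ δ x)⁻¹) b
        • M.yLp n b

theorem y_eq_sum_hEff_add_ups_add_eta (n : Fin N) (b : Fin B) (ω : Ω) :
    M.y n b ω = ∑ l, ∑ m, x l m b * M.hEff l m (b + 1) n ω
      + M.ups (fun l m => normSq (x l m b)) (b + 1) n ω + M.eta n (b + 1) ω := by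
  simp only [y, ups, hEff, Finset.mul_sum]
  congr 2
  exact Finset.sum_congr rfl fun l _ => Finset.sum_congr rfl fun m _ => by ring

theorem coeFn_yLp (n : Fin N) (b : Fin B) : M.yLp n b =ᵐ[ℙ] M.y n b := by
  have hrotated : ⇑(∑ l, ∑ m, x l m b • M.hEffLp l m (b + 1) n) =ᵐ[ℙ]
      fun ω => ∑ l, ∑ m, x l m b * M.hEff l m (b + 1) n ω := by
    simpa only [Fintype.sum_prod_type] using coeFn_sum_smul
      (fun i : Fin L × Fin K => x i.1 i.2 b) fun i => M.coeFn_hEffLp i.1 i.2 (b + 1) n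
  have hsignal := (Lp.coeFn_add _ _).trans (hrotated.add (M.coeFn_pilotDistortionLp n b))
  exact (Lp.coeFn_add _ _).trans <| (hsignal.add (M.coeFn_etaLp n b)).trans <|
    ae_of_all _ fun ω => (M.y_eq_sum_hEff_add_ups_add_eta n b ω).symm

theorem coeFn_errorLp (l : Fin L) (k : Fin K) (t : ℕ) (n : Fin N) :
    M.errorLp l k t n =ᵐ[ℙ] fun ω => M.hEff l k t n ω - M.hHat l k t n ω := by
  filter_upwards [Lp.coeFn_sub (M.hEffLp l k t n) _, M.coeFn_hEffLp l k t n,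
    coeFn_sum_smul _ (M.coeFn_yLp n)] with ω hsub hchannel hestimate
  rw [errorLp, hsub, Pi.sub_apply, hestimate, hchannel, hHat, Finset.mul_sum]
  simp only [smul_vecMul, vecMul_vecMul, Pi.smul_apply, smul_eq_mul, mul_assoc]

theorem memLp_hEff_sub_hHat (l : Fin L) (k : Fin K) (t : ℕ) (n : Fin N) :
    MemLp (fun ω => M.hEff l k t n ω - M.hHat l k t n ω) 2 ℙ :=
  (memLp_congr_ae (M.coeFn_errorLp l k t n)).1 (Lp.memLp _)

theorem inner_errorLp_self (hlam : ∀ l k, 0 ≤ lam l k) (hδ : 0 ≤ δ) (hσξ : 0 < σ2 * ξ)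
    (l : Fin L) (k : Fin K) {t : ℕ} (ht : B ≤ t) (n : Fin N) :
    ⟪M.errorLp l k t n, M.errorLp l k t n⟫_ℂ
      = lam l k * (1 - lam l k * (star (x l k) ⬝ᵥ
          (Dmat δ t B * (PsiMat lam σ2 ξ κ δ x)⁻¹ * (Dmat δ t B)ᴴ) *ᵥ x l k)) := by
  rw [errorLp, inner_self_sub_sum_vecMul_inv_smul (M.isUnit_PsiMat hlam hδ hσξ n)
    (fun b b' => (M.inner_yLp hlam hδ hσξ.le n n b b').trans (if_pos rfl))
    fun b => (M.inner_yLp_hEffLp hlam hδ l k ht n n b).trans (if_pos rfl), M.inner_hEffLp hlam hδ,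
    if_pos rfl, sub_self, abs_zero, mul_zero, Real.exp_zero, ofReal_one, mul_one]
  simp only [star_smul, star_vecMul, star_star, smul_vecMul, smul_dotProduct, dotProduct_smul,
    vecMul_vecMul, ← dotProduct_mulVec, mulVec_mulVec, smul_eq_mul, star_def, conj_ofReal]
  ring

theorem inner_errorLp_of_ne (hlam : ∀ l k, 0 ≤ lam l k) (hδ : 0 ≤ δ) (hσξ : 0 ≤ σ2 * ξ)
    (l : Fin L) (k : Fin K) {t : ℕ} (ht : B ≤ t) {n n' : Fin N} (hn : n ≠ n') :
    ⟪M.errorLp l k t n', M.errorLp l k t n⟫_ℂ = 0 := by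
  have hhy (b : Fin B) : ⟪M.hEffLp l k t n', M.yLp n b⟫_ℂ = 0 :=
    inner_eq_zero_symm.1 ((M.inner_yLp_hEffLp hlam hδ l k ht n' n b).trans (if_neg hn.symm))
  simp only [errorLp, inner_sub_left, inner_sub_right, inner_sum, sum_inner, inner_smul_left,
    inner_smul_right, hhy, M.inner_hEffLp hlam hδ, M.inner_yLp hlam hδ hσξ,
    M.inner_yLp_hEffLp hlam hδ l k ht, if_neg hn]
  simp [hn]

theorem errorCovariance_eq (hlam : ∀ l k, 0 ≤ lam l k) (hδ : 0 ≤ δ) (hσξ : 0 < σ2 * ξ)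
    (l : Fin L) (k : Fin K) {t : ℕ} (ht : B ≤ t) :
    (Matrix.of fun n₁ n₂ : Fin N => ∫ ω, (M.hEff l k t n₁ ω - M.hHat l k t n₁ ω)
        * star (M.hEff l k t n₂ ω - M.hHat l k t n₂ ω))
      = ((lam l k : ℂ) * (1 - lam l k * (star (x l k) ⬝ᵥ
          (Dmat δ t B * (PsiMat lam σ2 ξ κ δ x)⁻¹ * (Dmat δ t B)ᴴ) *ᵥ x l k)))
          • (1 : Matrix (Fin N) (Fin N) ℂ) := by
  ext n n'
  rw [of_apply, Matrix.smul_apply,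
    integral_mul_star_eq_inner (M.coeFn_errorLp l k t n) (M.coeFn_errorLp l k t n')]
  rcases eq_or_ne n n' with rfl | hn
  · rw [one_apply_eq, smul_eq_mul, mul_one, M.inner_errorLp_self hlam hδ hσξ l k ht]
  · rw [one_apply_ne hn, smul_zero, M.inner_errorLp_of_ne hlam hδ hσξ.le l k ht hn]

end HilbertSpace

end MIMOModel

/-- **Error covariance and MSE of the LMMSE estimator (Theorem 1).** For all `l, k`,
`E[(h_{jlk}(t) − ĥ_{jlk}(t))(h_{jlk}(t) − ĥ_{jlk}(t))ᴴ]
  = λ_{jlk}(1 − λ_{jlk} x̃_{lk}ᴴ D_{δ(t)} Ψ_j⁻¹ D_{δ(t)}ᴴ x̃_{lk}) · I_N`, and the MSE is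
`N λ_{jlk}(1 − λ_{jlk} x̃_{lk}ᴴ D_{δ(t)} Ψ_j⁻¹ D_{δ(t)}ᴴ x̃_{lk})`. -/
theorem lmmse_error_covariance
    {Ω : Type*} [MeasureSpace Ω] [IsProbabilityMeasure (ℙ : Measure Ω)]
    {N B L K : ℕ} {lam : Fin L → Fin K → ℝ} {σ2 ξ κ δ : ℝ}
    {x : Fin L → Fin K → Fin B → ℂ}
    (M : MIMOModel Ω N B L K lam σ2 ξ κ δ x)
    (hlam : ∀ l k, 0 < lam l k) (hσ2 : 0 < σ2) (hξ : 1 ≤ ξ) (hκ : 0 ≤ κ) (hδ : 0 ≤ δ)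
    (t : ℕ) (ht : B ≤ t) :
    ∀ l : Fin L, ∀ k : Fin K,
      ((Matrix.of fun n₁ n₂ : Fin N =>
          ∫ ω, (M.hEff l k t n₁ ω - M.hHat l k t n₁ ω)
            * star (M.hEff l k t n₂ ω - M.hHat l k t n₂ ω))
        = (((lam l k : ℝ) : ℂ) * (1 - ((lam l k : ℝ) : ℂ)
            * (star (x l k) ⬝ᵥ (Dmat δ t B * (PsiMat lam σ2 ξ κ δ x)⁻¹
                * (Dmat δ t B)ᴴ).mulVec (x l k))))
          • (1 : Matrix (Fin N) (Fin N) ℂ)) ∧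
      ((∫ ω, ∑ n, Complex.normSq (M.hEff l k t n ω - M.hHat l k t n ω) : ℝ) : ℂ)
        = (N : ℂ) * ((lam l k : ℝ) : ℂ) * (1 - ((lam l k : ℝ) : ℂ)
            * (star (x l k) ⬝ᵥ (Dmat δ t B * (PsiMat lam σ2 ξ κ δ x)⁻¹
                * (Dmat δ t B)ᴴ).mulVec (x l k))) := by
  intro l k
  have hcov := M.errorCovariance_eq (fun l k => (hlam l k).le) hδ
    (mul_pos hσ2 (one_pos.trans_le hξ)) l k ht
  refine ⟨hcov, ?_⟩
  rw [integral_sum_normSq_eq_trace (M.memLp_hEff_sub_hHat l k t), hcov, trace_smul, trace_one,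
    Fintype.card_fin, smul_eq_mul, mul_comm, ← mul_assoc (N : ℂ)]
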